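/- arXiv:2202.05614 — 2 statements merged into one kernel-verified Lean document; each statement's English description precedes it below -/
import Mathlib

section
/- Let H, K, E, E' be real Hilbert spaces, F, G : H → K bounded linear operators, V : H → E with V V* = I_E, U : K → E' with U U* = I_{E'}, and λ > 0. Set P_X = V*V (an orthogonal projection on H), P_Y = U*U (an orthogonal projection on K), Â = U ∘ F ∘ V* and B̂ = U ∘ G ∘ V*. Then λ ‖(P_Y G P_X G* P_Y + λ I)^{-1/2} ∘ (P_Y ∘ F ∘ P_X)‖²_op = λ ‖Â* ∘ (B̂ B̂* + λ I)^{-1} ∘ Â‖_op. -/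
open ContinuousLinearMap

/-!
Since `V V* = I`, composing with `V` on the right does not change operator norms, so
`‖S P_Y F P_X‖ = ‖S U* Â V‖ = ‖S U* Â‖`. As `S` is a self-adjoint square root of
`(P_Y G P_X G* P_Y + λ I)⁻¹`, the C*-identity turns the square of this norm into the norm of
`Â* U (P_Y G P_X G* P_Y + λ I)⁻¹ U* Â`. Finally `P_Y G P_X G* P_Y = U* (B̂ B̂*) U`, so
`U U* = I` makes `U*` intertwine the regularized operators, hence their inverses, and
`U (P_Y G P_X G* P_Y + λ I)⁻¹ U* = (B̂ B̂* + λ I)⁻¹`.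
-/

section Intertwining

variable {R M N : Type*}
  [TopologicalSpace M] [AddCommMonoid M] [TopologicalSpace N] [AddCommMonoid N]

theorem inverse_comp_eq_comp_inverse [Semiring R] [Module R M] [Module R N]
    {A J : M →L[R] M} {B L : N →L[R] N} {W : N →L[R] M}
    (hJA : J ∘L A = 1) (hBL : B ∘L L = 1) (hAW : A ∘L W = W ∘L B) : J ∘L W = W ∘L L :=
  calc J ∘L W = J ∘L W ∘L (B ∘L L) := by rw [hBL, one_def, comp_id]
    _ = J ∘L (A ∘L W) ∘L L := by rw [hAW]; rfl
    _ = (J ∘L A) ∘L W ∘L L := rfl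
    _ = W ∘L L := by rw [hJA, one_def, id_comp]

variable [CommSemiring R]
  [Module R M] [ContinuousAdd M] [ContinuousConstSMul R M]
  [Module R N] [ContinuousAdd N] [ContinuousConstSMul R N]

theorem conj_add_smul_one_comp {U : M →L[R] N} {W : N →L[R] M} (hUW : U ∘L W = 1)
    (C : N →L[R] N) (c : R) :
    (W ∘L C ∘L U + c • (1 : M →L[R] M)) ∘L W = W ∘L (C + c • (1 : N →L[R] N)) :=
  calc (W ∘L C ∘L U + c • (1 : M →L[R] M)) ∘L W = W ∘L C ∘L (U ∘L W) + c • W := by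
        rw [add_comp, smul_comp, one_def, id_comp]; rfl
    _ = W ∘L (C + c • (1 : N →L[R] N)) := by
        rw [hUW, comp_add, comp_smul, one_def, comp_id, comp_id]

theorem comp_inverse_conj_add_smul_one_comp {U : M →L[R] N} {W : N →L[R] M} (hUW : U ∘L W = 1)
    {C : N →L[R] N} {c : R} {J : M →L[R] M} {L : N →L[R] N}
    (hJ : J ∘L (W ∘L C ∘L U + c • (1 : M →L[R] M)) = 1)
    (hL : (C + c • (1 : N →L[R] N)) ∘L L = 1) : U ∘L J ∘L W = L := by
  rw [inverse_comp_eq_comp_inverse hJ hL (conj_add_smul_one_comp hUW C c), ← comp_assoc, hUW,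
    one_def, id_comp]

end Intertwining

section HilbertSpace

variable {𝕜 H K E E' : Type*} [RCLike 𝕜]
  [NormedAddCommGroup H] [InnerProductSpace 𝕜 H] [CompleteSpace H]
  [NormedAddCommGroup K] [InnerProductSpace 𝕜 K] [CompleteSpace K]
  [NormedAddCommGroup E] [InnerProductSpace 𝕜 E] [CompleteSpace E]
  [NormedAddCommGroup E'] [InnerProductSpace 𝕜 E'] [CompleteSpace E']

theorem norm_adjoint_le_one_of_comp_adjoint_eq_one {V : H →L[𝕜] E} (hV : V ∘L adjoint V = 1) :
    ‖adjoint V‖ ≤ 1 := by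
  have isometry_adjoint : ∀ x, ‖adjoint V x‖ = ‖x‖ :=
    (norm_map_iff_adjoint_comp_self (adjoint V)).2 (by rwa [adjoint_adjoint])
  exact opNorm_le_bound _ zero_le_one fun x => by rw [isometry_adjoint, one_mul]

theorem norm_comp_of_comp_adjoint_eq_one {Y : Type*} [SeminormedAddCommGroup Y] [NormedSpace 𝕜 Y]
    {V : H →L[𝕜] E} (hV : V ∘L adjoint V = 1) (T : E →L[𝕜] Y) : ‖T ∘L V‖ = ‖T‖ := by
  have norm_adjoint_le := norm_adjoint_le_one_of_comp_adjoint_eq_one hV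
  have norm_le : ‖V‖ ≤ 1 := by rwa [← LinearIsometryEquiv.norm_map adjoint V]
  apply le_antisymm
  · calc ‖T ∘L V‖ ≤ ‖T‖ * ‖V‖ := opNorm_comp_le _ _
      _ ≤ ‖T‖ := mul_le_of_le_one_right (norm_nonneg _) norm_le
  · calc ‖T‖ = ‖(T ∘L V) ∘L adjoint V‖ := by rw [comp_assoc, hV, one_def, comp_id]
      _ ≤ ‖T ∘L V‖ * ‖adjoint V‖ := opNorm_comp_le _ _
      _ ≤ ‖T ∘L V‖ := mul_le_of_le_one_right (norm_nonneg _) norm_adjoint_le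

theorem norm_comp_sq_of_isSelfAdjoint {S : K →L[𝕜] K} (hS : IsSelfAdjoint S) (T : H →L[𝕜] K) :
    ‖S ∘L T‖ ^ 2 = ‖adjoint T ∘L (S ∘L S) ∘L T‖ := by
  rw [sq, ← norm_adjoint_comp_self, adjoint_comp, hS.adjoint_eq]
  rfl

theorem stmt12_general (F G : H →L[𝕜] K)
    (V : H →L[𝕜] E) (hV : V ∘L adjoint V = 1)
    (U : K →L[𝕜] E') (hU : U ∘L adjoint U = 1)
    (l : 𝕜)
    (PX : H →L[𝕜] H) (hPX : PX = adjoint V ∘L V)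
    (PY : K →L[𝕜] K) (hPY : PY = adjoint U ∘L U)
    (Ahat : E →L[𝕜] E') (hAhat : Ahat = U ∘L F ∘L adjoint V)
    (Bhat : E →L[𝕜] E') (hBhat : Bhat = U ∘L G ∘L adjoint V)
    (JM S : K →L[𝕜] K)
    (hJM : JM ∘L (PY ∘L G ∘L PX ∘L adjoint G ∘L PY + l • (1 : K →L[𝕜] K)) = 1)
    (hS : IsSelfAdjoint S) (hSsq : S ∘L S = JM)
    (JB : E' →L[𝕜] E')
    (hJB : (Bhat ∘L adjoint Bhat + l • (1 : E' →L[𝕜] E')) ∘L JB = 1) :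
    ‖S ∘L (PY ∘L F ∘L PX)‖ ^ 2 = ‖adjoint Ahat ∘L JB ∘L Ahat‖ := by
  have conj_A : PY ∘L F ∘L PX = adjoint U ∘L Ahat ∘L V := by
    rw [hPX, hPY, hAhat]; rfl
  have conj_BB : PY ∘L G ∘L PX ∘L adjoint G ∘L PY
      = adjoint U ∘L (Bhat ∘L adjoint Bhat) ∘L U := by
    rw [hPX, hPY, hBhat, adjoint_comp, adjoint_comp, adjoint_adjoint]; rfl
  rw [conj_BB] at hJM
  calc ‖S ∘L (PY ∘L F ∘L PX)‖ ^ 2 = ‖(S ∘L adjoint U ∘L Ahat) ∘L V‖ ^ 2 := by rw [conj_A]; rfl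
    _ = ‖S ∘L adjoint U ∘L Ahat‖ ^ 2 := by rw [norm_comp_of_comp_adjoint_eq_one hV]
    _ = ‖adjoint Ahat ∘L (U ∘L JM ∘L adjoint U) ∘L Ahat‖ := by
        rw [norm_comp_sq_of_isSelfAdjoint hS, hSsq, adjoint_comp, adjoint_adjoint]; rfl
    _ = ‖adjoint Ahat ∘L JB ∘L Ahat‖ := by
        rw [comp_inverse_conj_add_smul_one_comp hU hJM hJB]

end HilbertSpace

/-- Finite-dimensional characterization of the Nyström estimator: with `P_X = V*V`,
`P_Y = U*U`, `Â = U F V*` and `B̂ = U G V*`, one has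
`λ ‖(P_Y G P_X G* P_Y + λ I)^{-1/2} (P_Y F P_X)‖² = λ ‖Â* (B̂ B̂* + λ I)^{-1} Â‖`.
Here `JM` is the inverse of `P_Y G P_X G* P_Y + λ I` and `S` its positive square root,
while `JB` is the inverse of `B̂ B̂* + λ I`. -/
theorem stmt12
    {H K E E' : Type*}
    [NormedAddCommGroup H] [InnerProductSpace ℝ H] [CompleteSpace H]
    [NormedAddCommGroup K] [InnerProductSpace ℝ K] [CompleteSpace K]
    [NormedAddCommGroup E] [InnerProductSpace ℝ E] [CompleteSpace E]
    [NormedAddCommGroup E'] [InnerProductSpace ℝ E'] [CompleteSpace E']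
    (F G : H →L[ℝ] K)
    (V : H →L[ℝ] E) (hV : V ∘L adjoint V = 1)
    (U : K →L[ℝ] E') (hU : U ∘L adjoint U = 1)
    (l : ℝ) (hl : 0 < l)
    (PX : H →L[ℝ] H) (hPX : PX = adjoint V ∘L V)
    (PY : K →L[ℝ] K) (hPY : PY = adjoint U ∘L U)
    (Ahat : E →L[ℝ] E') (hAhat : Ahat = U ∘L F ∘L adjoint V)
    (Bhat : E →L[ℝ] E') (hBhat : Bhat = U ∘L G ∘L adjoint V)
    (JM S : K →L[ℝ] K)
    (hJM : (PY ∘L G ∘L PX ∘L adjoint G ∘L PY + l • (1 : K →L[ℝ] K)) ∘L JM = 1)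
    (hJM' : JM ∘L (PY ∘L G ∘L PX ∘L adjoint G ∘L PY + l • (1 : K →L[ℝ] K)) = 1)
    (hS : S.IsPositive) (hSsq : S ∘L S = JM)
    (JB : E' →L[ℝ] E')
    (hJB : (Bhat ∘L adjoint Bhat + l • (1 : E' →L[ℝ] E')) ∘L JB = 1)
    (hJB' : JB ∘L (Bhat ∘L adjoint Bhat + l • (1 : E' →L[ℝ] E')) = 1) :
    l * ‖S ∘L (PY ∘L F ∘L PX)‖ ^ 2 = l * ‖adjoint Ahat ∘L JB ∘L Ahat‖ := by
  rw [stmt12_general F G V hV U hU l PX hPX PY hPY Ahat hAhat Bhat hBhat JM S hJM'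
    hS.isSelfAdjoint hSsq JB hJB]
end

section
/- Let H and K be real Hilbert spaces, F, F̂, G, Ĝ : H → K bounded linear operators with ‖F‖_op ≤ L, and λ > 0. Then | λ ‖(G G* + λ I)^{-1/2} F‖²_op − λ ‖(Ĝ Ĝ* + λ I)^{-1/2} F̂‖²_op | ≤ L² λ^{-1} ‖G G* − Ĝ Ĝ*‖_op + ‖F F* − F̂ F̂*‖_op. (This is the deterministic core of the approximation-error bound for the Nyström estimator of D_λ.) -/
open ContinuousLinearMap

/-!
By the C⋆-identity, `‖S F‖² = ‖F* (S* S) F‖ = ‖S (F F*) S*‖`, so `‖S F‖²` is Lipschitz in `S* S`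
with constant `‖F‖²` for fixed `F`, and Lipschitz in `F F*` with constant `‖S‖²` for fixed `S`.
Changing first `S` and then `F`, it remains to bound `‖S‖²` and the variation of
`S* S = (A + λ)⁻¹`, where `A = G G*`. As `A + λ` is bounded below by `λ`, its inverse has norm at
most `λ⁻¹`, and the resolvent identity
`(A + λ)⁻¹ - (B + λ)⁻¹ = (A + λ)⁻¹ (B - A) (B + λ)⁻¹`
shows that `S* S` varies by at most `λ⁻² ‖A - B‖`.
-/

open scoped NNReal InnerProductSpace Ring

theorem eq_ringInverse_of_mul_eq_one {M : Type*} [MonoidWithZero M] {a b : M}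
    (hab : a * b = 1) (hba : b * a = 1) : b = a⁻¹ʳ :=
  (Ring.inverse_unit ⟨a, b, hab, hba⟩).symm

section

variable {𝕜 K : Type*} [RCLike 𝕜] [NormedAddCommGroup K] [InnerProductSpace 𝕜 K]

theorem norm_sq_mul_le_norm_inner_add_smul_one {A : K →L[𝕜] K} (hA : A.IsPositive) (l : ℝ) (x : K) :
    ‖x‖ ^ 2 * l ≤ ‖⟪(A + (l : 𝕜) • (1 : K →L[𝕜] K)) x, x⟫_𝕜‖ := by
  have hre : RCLike.re ⟪(A + (l : 𝕜) • (1 : K →L[𝕜] K)) x, x⟫_𝕜 =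
      RCLike.re ⟪A x, x⟫_𝕜 + ‖x‖ ^ 2 * l := by
    simp [inner_add_left, inner_smul_left, mul_comm]
  linarith [hA.re_inner_nonneg_left x,
    RCLike.re_le_norm ⟪(A + (l : 𝕜) • (1 : K →L[𝕜] K)) x, x⟫_𝕜]

variable [CompleteSpace K]

theorem norm_ringInverse_le_of_forall_le_norm_inner_map {T : K →L[𝕜] K} {c : ℝ≥0} (hc : 0 < c)
    (hT : ∀ x, ‖x‖ ^ 2 * c ≤ ‖⟪T x, x⟫_𝕜‖) : ‖T⁻¹ʳ‖ ≤ (c : ℝ)⁻¹ := by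
  have hunit : IsUnit T := isUnit_of_forall_le_norm_inner_map T hc hT
  refine opNorm_le_bound _ (by positivity) fun x ↦ ?_
  calc ‖T⁻¹ʳ x‖ ≤ (c : ℝ)⁻¹ * ‖T (T⁻¹ʳ x)‖ := by
        exact_mod_cast (antilipschitz_of_forall_le_inner_map T hc hT).le_mul_norm (map_zero T) _
    _ = (c : ℝ)⁻¹ * ‖x‖ := by
        rw [← mul_apply_eq_comp, Ring.mul_inverse_cancel T hunit, one_apply_eq_self]

theorem norm_ringInverse_sub_ringInverse_le_of_forall_le_norm_inner_map
    {T U : K →L[𝕜] K} {c : ℝ≥0} (hc : 0 < c)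
    (hT : ∀ x, ‖x‖ ^ 2 * c ≤ ‖⟪T x, x⟫_𝕜‖) (hU : ∀ x, ‖x‖ ^ 2 * c ≤ ‖⟪U x, x⟫_𝕜‖) :
    ‖T⁻¹ʳ - U⁻¹ʳ‖ ≤ (c : ℝ)⁻¹ ^ 2 * ‖T - U‖ := by
  have hunit : IsUnit T ↔ IsUnit U :=
    iff_of_true (isUnit_of_forall_le_norm_inner_map T hc hT)
      (isUnit_of_forall_le_norm_inner_map U hc hU)
  calc ‖T⁻¹ʳ - U⁻¹ʳ‖ = ‖T⁻¹ʳ * (U - T) * U⁻¹ʳ‖ := by rw [Ring.inverse_sub_inverse hunit]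
    _ ≤ ‖T⁻¹ʳ‖ * ‖U - T‖ * ‖U⁻¹ʳ‖ := norm_mul₃_le
    _ ≤ (c : ℝ)⁻¹ * ‖U - T‖ * (c : ℝ)⁻¹ := by
        grw [norm_ringInverse_le_of_forall_le_norm_inner_map hc hT,
          norm_ringInverse_le_of_forall_le_norm_inner_map hc hU]
    _ = (c : ℝ)⁻¹ ^ 2 * ‖T - U‖ := by
        rw [norm_sub_rev]
        ring

variable {H H₁ H₂ K₁ K₂ : Type*}
  [NormedAddCommGroup H] [InnerProductSpace 𝕜 H] [CompleteSpace H]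
  [NormedAddCommGroup H₁] [InnerProductSpace 𝕜 H₁] [CompleteSpace H₁]
  [NormedAddCommGroup H₂] [InnerProductSpace 𝕜 H₂] [CompleteSpace H₂]
  [NormedAddCommGroup K₁] [InnerProductSpace 𝕜 K₁] [CompleteSpace K₁]
  [NormedAddCommGroup K₂] [InnerProductSpace 𝕜 K₂] [CompleteSpace K₂]

theorem norm_sq_eq_norm_adjoint_comp_self (T : H →L[𝕜] K) : ‖T‖ ^ 2 = ‖adjoint T ∘L T‖ := by
  rw [norm_adjoint_comp_self, sq]

theorem norm_comp_sq_eq_norm_adjoint_comp (S : K →L[𝕜] K₁) (F : H →L[𝕜] K) :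
    ‖S ∘L F‖ ^ 2 = ‖adjoint F ∘L (adjoint S ∘L S) ∘L F‖ := by
  rw [norm_sq_eq_norm_adjoint_comp_self, adjoint_comp]
  rfl

theorem abs_norm_comp_sq_sub_norm_comp_sq_le_left
    (S : K →L[𝕜] K₁) (T : K →L[𝕜] K₂) (F : H →L[𝕜] K) :
    |‖S ∘L F‖ ^ 2 - ‖T ∘L F‖ ^ 2| ≤ ‖F‖ ^ 2 * ‖adjoint S ∘L S - adjoint T ∘L T‖ := by
  rw [norm_comp_sq_eq_norm_adjoint_comp, norm_comp_sq_eq_norm_adjoint_comp]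
  calc |‖adjoint F ∘L (adjoint S ∘L S) ∘L F‖ - ‖adjoint F ∘L (adjoint T ∘L T) ∘L F‖|
      ≤ ‖adjoint F ∘L (adjoint S ∘L S - adjoint T ∘L T) ∘L F‖ := by
        rw [sub_comp, comp_sub]
        exact abs_norm_sub_norm_le _ _
    _ ≤ ‖adjoint F‖ * (‖adjoint S ∘L S - adjoint T ∘L T‖ * ‖F‖) := by
        grw [opNorm_comp_le, opNorm_comp_le]
    _ = ‖F‖ ^ 2 * ‖adjoint S ∘L S - adjoint T ∘L T‖ := by
        rw [LinearIsometryEquiv.norm_map]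
        ring

theorem abs_norm_comp_sq_sub_norm_comp_sq_le_right
    (S : K →L[𝕜] K₁) (F : H₁ →L[𝕜] K) (E : H₂ →L[𝕜] K) :
    |‖S ∘L F‖ ^ 2 - ‖S ∘L E‖ ^ 2| ≤ ‖S‖ ^ 2 * ‖F ∘L adjoint F - E ∘L adjoint E‖ := by
  simpa only [← adjoint_comp, adjoint_adjoint, LinearIsometryEquiv.norm_map] using
    abs_norm_comp_sq_sub_norm_comp_sq_le_left (adjoint F) (adjoint E) (adjoint S)

theorem abs_norm_comp_sq_sub_norm_comp_sq_le
    (S : K →L[𝕜] K₁) (T : K →L[𝕜] K₂) (F : H₁ →L[𝕜] K) (E : H₂ →L[𝕜] K) :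
    |‖S ∘L F‖ ^ 2 - ‖T ∘L E‖ ^ 2| ≤
      ‖F‖ ^ 2 * ‖adjoint S ∘L S - adjoint T ∘L T‖ +
        ‖T‖ ^ 2 * ‖F ∘L adjoint F - E ∘L adjoint E‖ :=
  (abs_sub_le _ (‖T ∘L F‖ ^ 2) _).trans <|
    add_le_add (abs_norm_comp_sq_sub_norm_comp_sq_le_left S T F)
      (abs_norm_comp_sq_sub_norm_comp_sq_le_right T F E)

theorem stmt17_general
    (F : H₁ →L[𝕜] K) (Fhat : H₂ →L[𝕜] K) {L : ℝ} (hF : ‖F‖ ≤ L) {l : ℝ} (hl : 0 < l)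
    {A Ahat : K →L[𝕜] K} (hA : A.IsPositive) (hAhat : Ahat.IsPositive)
    {S : K →L[𝕜] K₁} {Shat : K →L[𝕜] K₂}
    (hS : adjoint S ∘L S = (A + (l : 𝕜) • (1 : K →L[𝕜] K))⁻¹ʳ)
    (hShat : adjoint Shat ∘L Shat = (Ahat + (l : 𝕜) • (1 : K →L[𝕜] K))⁻¹ʳ) :
    |l * ‖S ∘L F‖ ^ 2 - l * ‖Shat ∘L Fhat‖ ^ 2| ≤
      L ^ 2 * l⁻¹ * ‖A - Ahat‖ + ‖F ∘L adjoint F - Fhat ∘L adjoint Fhat‖ := by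
  lift l to ℝ≥0 using hl.le
  have hbelow := norm_sq_mul_le_norm_inner_add_smul_one hA l
  have hbelow_hat := norm_sq_mul_le_norm_inner_add_smul_one hAhat l
  have hresolvent : ‖adjoint S ∘L S - adjoint Shat ∘L Shat‖ ≤ (l : ℝ)⁻¹ ^ 2 * ‖A - Ahat‖ := by
    simpa only [hS, hShat, add_sub_add_right_eq_sub] using
      norm_ringInverse_sub_ringInverse_le_of_forall_le_norm_inner_map hl hbelow hbelow_hat
  have hShat_norm : ‖Shat‖ ^ 2 ≤ (l : ℝ)⁻¹ := by
    rw [norm_sq_eq_norm_adjoint_comp_self, hShat]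
    exact norm_ringInverse_le_of_forall_le_norm_inner_map hl hbelow_hat
  calc |l * ‖S ∘L F‖ ^ 2 - l * ‖Shat ∘L Fhat‖ ^ 2|
      = l * |‖S ∘L F‖ ^ 2 - ‖Shat ∘L Fhat‖ ^ 2| := by rw [← mul_sub, abs_mul, abs_of_pos hl]
    _ ≤ l * (L ^ 2 * ((l : ℝ)⁻¹ ^ 2 * ‖A - Ahat‖) +
          (l : ℝ)⁻¹ * ‖F ∘L adjoint F - Fhat ∘L adjoint Fhat‖) := by
        grw [abs_norm_comp_sq_sub_norm_comp_sq_le, hF, hresolvent, hShat_norm]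
    _ = L ^ 2 * (l : ℝ)⁻¹ * ‖A - Ahat‖ + ‖F ∘L adjoint F - Fhat ∘L adjoint Fhat‖ := by
        field_simp

end

/-- Deterministic core of the approximation-error bound for the Nyström estimator of `D_λ`:
if `‖F‖ ≤ L` then
`| λ ‖(G G* + λ I)^{-1/2} F‖² − λ ‖(Ĝ Ĝ* + λ I)^{-1/2} F̂‖² |
   ≤ L² λ^{-1} ‖G G* − Ĝ Ĝ*‖ + ‖F F* − F̂ F̂*‖`.
Here `JG` (resp. `JGhat`) is the inverse of `G G* + λ I` (resp. `Ĝ Ĝ* + λ I`) and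
`S` (resp. `Shat`) its positive square root. -/
theorem stmt17
    {H K : Type*} [NormedAddCommGroup H] [InnerProductSpace ℝ H] [CompleteSpace H]
    [NormedAddCommGroup K] [InnerProductSpace ℝ K] [CompleteSpace K]
    (F Fhat G Ghat : H →L[ℝ] K) (L : ℝ) (hF : ‖F‖ ≤ L) (l : ℝ) (hl : 0 < l)
    (JG JGhat S Shat : K →L[ℝ] K)
    (hJG : (G ∘L adjoint G + l • (1 : K →L[ℝ] K)) ∘L JG = 1)
    (hJG' : JG ∘L (G ∘L adjoint G + l • (1 : K →L[ℝ] K)) = 1)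
    (hJGhat : (Ghat ∘L adjoint Ghat + l • (1 : K →L[ℝ] K)) ∘L JGhat = 1)
    (hJGhat' : JGhat ∘L (Ghat ∘L adjoint Ghat + l • (1 : K →L[ℝ] K)) = 1)
    (hS : S.IsPositive) (hSsq : S ∘L S = JG)
    (hShat : Shat.IsPositive) (hShatsq : Shat ∘L Shat = JGhat) :
    |l * ‖S ∘L F‖ ^ 2 - l * ‖Shat ∘L Fhat‖ ^ 2|
      ≤ L ^ 2 * l⁻¹ * ‖G ∘L adjoint G - Ghat ∘L adjoint Ghat‖
        + ‖F ∘L adjoint F - Fhat ∘L adjoint Fhat‖ :=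
  stmt17_general F Fhat hF hl (isPositive_self_comp_adjoint G) (isPositive_self_comp_adjoint Ghat)
    (by rw [hS.isSelfAdjoint.adjoint_eq, hSsq]; exact eq_ringInverse_of_mul_eq_one hJG hJG')
    (by rw [hShat.isSelfAdjoint.adjoint_eq, hShatsq]
        exact eq_ringInverse_of_mul_eq_one hJGhat hJGhat')
end
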